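/- Let N ≥ 5 and let p ∈ (0,∞) satisfy p > 2N−2 if N is even, and p > 2N−4 if N is odd. Then X_N^(h) satisfies FP_{p,N,2}(X_N^(h)) ≤ FP_{p,N,2}(X) for every X ∈ S(N,2), and every X ∈ S(N,2) attaining equality is equivalent to X_N^(h). -/

import Mathlib

open scoped RealInnerProductSpace
open Real

/-- `X_N^(h)`: the `N`-tuple of unit vectors `(cos(kπ/N), sin(kπ/N))`, `k = 0,…,N−1`,
i.e. `N` equally spaced points on the half circle. -/
noncomputable def halfCircle (N : ℕ) : Fin N → EuclideanSpace ℝ (Fin 2) :=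
  fun k => (WithLp.equiv 2 (Fin 2 → ℝ)).symm
    ![cos ((k : ℕ) * π / N), sin ((k : ℕ) * π / N)]

/-- Two configurations are equivalent if one is obtained from the other by an orthogonal
transformation, a permutation of the points, and sign switches. -/
def EquivConfig (d N : ℕ) (X Y : Fin N → EuclideanSpace ℝ (Fin d)) : Prop :=
  ∃ (U : EuclideanSpace ℝ (Fin d) ≃ₗᵢ[ℝ] EuclideanSpace ℝ (Fin d))
    (σ : Equiv.Perm (Fin N)) (s : Fin N → ℝ),
    (∀ i, s i = 1 ∨ s i = -1) ∧ ∀ i, Y i = s i • U (X (σ i))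

/-- The `p`-frame potential `FP_{p,N,d}(X) = Σ_{k≠ℓ} |⟨x_k,x_ℓ⟩|^p`. -/
noncomputable def framePotential (d N : ℕ) (p : ℝ)
    (X : Fin N → EuclideanSpace ℝ (Fin d)) : ℝ :=
  ∑ k : Fin N, ∑ l : Fin N, if k ≠ l then |⟪X k, X l⟫| ^ p else 0

def MCl : ℕ → (ℝ → ℝ) → Prop
  | 0, g => ContinuousOn g (Set.Ioi (-1)) ∧ ∀ t, -1 < t → 0 < g t
  | n + 1, g => (∀ t, -1 < t → 0 < g t) ∧
      ∃ g' : ℝ → ℝ, MCl n g' ∧ ∀ t, -1 < t → HasDerivAt g (g' t) t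

lemma MCl.pos {n : ℕ} {g : ℝ → ℝ} (h : MCl n g) : ∀ t, -1 < t → 0 < g t := by
  cases n with
  | zero => exact h.2
  | succ n => exact h.1

lemma MCl.cont {n : ℕ} {g : ℝ → ℝ} (h : MCl n g) : ContinuousOn g (Set.Ioi (-1)) := by
  cases n with
  | zero => exact h.1
  | succ n =>
    obtain ⟨-, g', -, hg'⟩ := h
    exact fun t ht => (hg' t ht).continuousAt.continuousWithinAt

noncomputable def TOp (a : ℝ) (k : ℕ) (g : ℝ → ℝ) (t : ℝ) : ℝ :=
  ∫ s in (0:ℝ)..1, s ^ k * g (a + s * (t - a))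

lemma seg_gt {a t b s : ℝ} (ha : b < a) (ht : b < t) (h0 : 0 ≤ s) (h1 : s ≤ 1) :
    b < a + s * (t - a) := by
  rcases le_total a t with h | h
  · nlinarith [mul_nonneg h0 (sub_nonneg.2 h)]
  · nlinarith [mul_nonneg (sub_nonneg.2 h1) (sub_nonneg.2 h)]

lemma seg_lt {a t b s : ℝ} (ha : a < b) (ht : t < b) (h0 : 0 ≤ s) (h1 : s ≤ 1) :
    a + s * (t - a) < b := by
  rcases le_total a t with h | h
  · nlinarith [mul_nonneg (sub_nonneg.2 h1) (sub_nonneg.2 h)]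
  · nlinarith [mul_nonneg h0 (sub_nonneg.2 h)]

lemma seg_cont {a t : ℝ} {k : ℕ} {g : ℝ → ℝ} (hg : ContinuousOn g (Set.Ioi (-1)))
    (ha : -1 < a) (ht : -1 < t) :
    ContinuousOn (fun s => s ^ k * g (a + s * (t - a))) (Set.Icc 0 1) := by
  apply ContinuousOn.mul (by fun_prop)
  apply hg.comp (by fun_prop)
  intro s hs
  exact seg_gt ha ht hs.1 hs.2

lemma seg_int {a t : ℝ} {k : ℕ} {g : ℝ → ℝ} (hg : ContinuousOn g (Set.Ioi (-1)))
    (ha : -1 < a) (ht : -1 < t) {u v : ℝ} (hu : 0 ≤ u) (huv : u ≤ v) (hv : v ≤ 1) :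
    IntervalIntegrable (fun s => s ^ k * g (a + s * (t - a))) MeasureTheory.volume u v := by
  apply ContinuousOn.intervalIntegrable
  rw [Set.uIcc_of_le huv]
  exact (seg_cont hg ha ht).mono (Set.Icc_subset_Icc hu hv)

lemma TOp_pos {a : ℝ} {k : ℕ} {g : ℝ → ℝ} (hg : ContinuousOn g (Set.Ioi (-1)))
    (hp : ∀ t, -1 < t → 0 < g t) (ha : -1 < a) (t : ℝ) (ht : -1 < t) : 0 < TOp a k g t := by
  apply intervalIntegral.intervalIntegral_pos_of_pos_on
  · exact seg_int hg ha ht le_rfl zero_le_one le_rfl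
  · intro s hs
    exact mul_pos (pow_pos hs.1 _) (hp _ (seg_gt ha ht hs.1.le hs.2.le))
  · exact zero_lt_one

lemma TOp_cont {a : ℝ} {k : ℕ} {g : ℝ → ℝ} (hg : ContinuousOn g (Set.Ioi (-1)))
    (ha : -1 < a) : ContinuousOn (TOp a k g) (Set.Ioi (-1)) := by
  intro t ht
  have ht : -1 < t := ht
  obtain ⟨b, hb1, hb2⟩ := exists_between (lt_min ha ht)
  have hba := hb2.trans_le (min_le_left _ _)
  have hbt := hb2.trans_le (min_le_right _ _)
  have hG : Continuous (fun x => g (max b x)) := by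
    apply hg.comp_continuous (by fun_prop)
    intro x
    exact hb1.trans_le (le_max_left _ _)
  have h1 : Continuous (fun x : ℝ => ∫ s in (0:ℝ)..1, s ^ k * g (max b (a + s * (x - a)))) := by
    apply intervalIntegral.continuous_parametric_intervalIntegral_of_continuous'
    unfold Function.uncurry
    apply Continuous.mul (by fun_prop)
    exact hG.comp (by fun_prop : Continuous fun p : ℝ × ℝ => a + p.2 * (p.1 - a))
  apply ContinuousAt.continuousWithinAt
  apply h1.continuousAt.congr
  filter_upwards [Ioi_mem_nhds hbt] with x hx
  unfold TOp
  apply intervalIntegral.integral_congr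
  intro s hs
  rw [Set.uIcc_of_le zero_le_one] at hs
  simp only
  rw [max_eq_right (seg_gt hba hx hs.1 hs.2).le]

lemma TOp_deriv {a : ℝ} {k : ℕ} {g g' : ℝ → ℝ} (hg' : ContinuousOn g' (Set.Ioi (-1)))
    (hd : ∀ t, -1 < t → HasDerivAt g (g' t) t) (ha : -1 < a) (t : ℝ) (ht : -1 < t) :
    HasDerivAt (TOp a k g) (TOp a (k+1) g' t) t := by
  obtain ⟨b, hb1, hb2⟩ := exists_between (lt_min ha ht)
  have hba := hb2.trans_le (min_le_left _ _)
  have hbt := hb2.trans_le (min_le_right _ _)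
  obtain ⟨c, hc⟩ := exists_gt (max a t)
  have hac := (le_max_left _ _).trans_lt hc
  have htc := (le_max_right _ _).trans_lt hc
  have hg : ContinuousOn g (Set.Ioi (-1)) :=
    fun t ht => (hd t ht).continuousAt.continuousWithinAt
  obtain ⟨K, hK⟩ := (isCompact_Icc (a := b) (b := c)).exists_bound_of_continuousOn
    (hg'.mono (fun x hx => hb1.trans_le hx.1))
  have key := intervalIntegral.hasDerivAt_integral_of_dominated_loc_of_deriv_le
    (μ := MeasureTheory.volume) (a := (0:ℝ)) (b := 1) (x₀ := t) (s := Set.Ioo b c)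
    (F := fun x s => s ^ k * g (a + s * (x - a)))
    (F' := fun x s => s ^ (k+1) * g' (a + s * (x - a))) (bound := fun _ => K)
    (Ioo_mem_nhds hbt htc) ?_ ?_ ?_ ?_ ?_ ?_
  · exact key.2
  · filter_upwards [Ioi_mem_nhds ht] with x hx
    exact (seg_int hg ha hx le_rfl zero_le_one le_rfl).def'.aestronglyMeasurable
  · exact seg_int hg ha ht le_rfl zero_le_one le_rfl
  · exact (seg_int hg' ha ht le_rfl zero_le_one le_rfl).def'.aestronglyMeasurable
  · refine Filter.Eventually.of_forall fun s hs x hx => ?_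
    rw [Set.uIoc_of_le zero_le_one] at hs
    have h2 := hK _ ⟨(seg_gt hba hx.1 hs.1.le hs.2).le, (seg_lt hac hx.2 hs.1.le hs.2).le⟩
    rw [norm_mul]
    have : ‖s ^ (k+1)‖ ≤ 1 := by
      rw [norm_pow]
      apply pow_le_one₀ (norm_nonneg _)
      rw [Real.norm_of_nonneg hs.1.le]; exact hs.2
    calc _ ≤ 1 * ‖g' (a + s * (x - a))‖ := by gcongr
      _ ≤ K := by rw [one_mul]; exact h2
  · exact intervalIntegrable_const
  · refine Filter.Eventually.of_forall fun s hs x hx => ?_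
    rw [Set.uIoc_of_le zero_le_one] at hs
    have h3 : HasDerivAt (fun x => a + s * (x - a)) (s * 1) x :=
      (((hasDerivAt_id x).sub_const a).const_mul s).const_add a
    have h4 := (hd _ (hb1.trans (seg_gt hba hx.1 hs.1.le hs.2))).comp x h3
    have h5 := h4.const_mul (s ^ k)
    refine HasDerivAt.congr_deriv h5 ?_
    ring

lemma MCl.TOp {n : ℕ} {g : ℝ → ℝ} {a : ℝ} {k : ℕ} (ha : -1 < a) (h : MCl n g) :
    MCl n (TOp a k g) := by
  induction n generalizing g k with
  | zero => exact ⟨TOp_cont h.cont ha, TOp_pos h.cont h.pos ha⟩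
  | succ n ih =>
    refine ⟨TOp_pos h.cont h.pos ha, ?_⟩
    obtain ⟨-, g', h1, h2⟩ := h
    exact ⟨_, ih (k := k+1) h1, TOp_deriv h1.cont h2 ha⟩

lemma TOp_lower {a : ℝ} {g : ℝ → ℝ} (hg : ContinuousOn g (Set.Ioi (-1)))
    (hp : ∀ t, -1 < t → 0 < g t) (ha : -1 < a) :
    ∃ c > 0, ∀ t, -1 < t → t ≤ 1 → c ≤ TOp a 0 g t := by
  have hne : (Set.Icc ((a-1)/2) (max a 1)).Nonempty := by
    refine ⟨a, ?_, le_max_left _ _⟩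
    linarith
  obtain ⟨x, hx, hmin⟩ := (isCompact_Icc (a := (a-1)/2) (b := max a 1)).exists_isMinOn hne
    (hg.mono (fun x hx => (by linarith : -1 < (a-1)/2).trans_le hx.1))
  refine ⟨g x / 2, half_pos (hp x ((by linarith : -1 < (a-1)/2).trans_le hx.1)), ?_⟩
  intro t ht ht1
  have i1 := seg_int (k := 0) hg ha ht le_rfl (by norm_num : (0:ℝ) ≤ 1/2) (by norm_num)
  have i2 := seg_int (k := 0) hg ha ht (by norm_num : (0:ℝ) ≤ 1/2) (by norm_num : (1/2:ℝ) ≤ 1) le_rfl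
  have e := intervalIntegral.integral_add_adjacent_intervals i1 i2
  have l2 : 0 ≤ ∫ s in (1/2:ℝ)..1, s ^ 0 * g (a + s * (t - a)) := by
    apply intervalIntegral.integral_nonneg (by norm_num)
    intro s hs
    have : (0:ℝ) ≤ s := by linarith [hs.1]
    exact mul_nonneg (by positivity) (hp _ (seg_gt ha ht this hs.2)).le
  have l1 : ∫ s in (0:ℝ)..(1/2), g x ≤ ∫ s in (0:ℝ)..(1/2), s ^ 0 * g (a + s * (t - a)) := by
    apply intervalIntegral.integral_mono_on (by norm_num) intervalIntegrable_const i1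
    intro s hs
    rw [pow_zero, one_mul]
    apply hmin
    constructor
    · nlinarith [hs.1, hs.2, mul_nonneg hs.1 (by linarith : 0 ≤ t + 1)]
    · have h1 := le_max_left a 1
      have h2 := le_max_right a 1
      nlinarith [hs.1, hs.2, mul_nonneg hs.1 (by linarith : 0 ≤ max a 1 - t), mul_nonneg (by linarith [hs.2] : 0 ≤ 1 - s) (sub_nonneg.2 h1)]
  rw [intervalIntegral.integral_const] at l1
  unfold TOp
  rw [← e]
  simp only [smul_eq_mul] at l1
  linarith

lemma MCl.slope {n : ℕ} {g : ℝ → ℝ} (h : MCl (n+1) g) {a : ℝ} (ha : -1 < a) :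
    ∃ R, MCl n R ∧ (∃ c > 0, ∀ t, -1 < t → t ≤ 1 → c ≤ R t) ∧
      ∀ t, -1 < t → g t = g a + (t - a) * R t := by
  obtain ⟨hpos, g', h1, h2⟩ := h
  refine ⟨_, h1.TOp (k := 0) ha, TOp_lower h1.cont h1.pos ha, ?_⟩
  intro t ht
  unfold _root_.TOp
  have : ∫ s in (0:ℝ)..1, (t - a) * (s ^ 0 * g' (a + s * (t - a))) = g (a + 1 * (t - a)) - g (a + 0 * (t - a)) := by
    apply intervalIntegral.integral_eq_sub_of_hasDerivAt (f := fun s => g (a + s * (t - a)))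
    · intro s hs
      rw [Set.uIcc_of_le zero_le_one] at hs
      have h3 : HasDerivAt (fun s => a + s * (t - a)) (1 * (t - a)) s :=
        ((hasDerivAt_id s).mul_const _).const_add a
      have h4 := (h2 _ (seg_gt ha ht hs.1 hs.2)).comp s h3
      refine HasDerivAt.congr_deriv h4 ?_
      ring
    · exact (seg_int h1.cont ha ht le_rfl zero_le_one le_rfl).const_mul _
  rw [intervalIntegral.integral_const_mul] at this
  rw [this]
  simp

lemma MCl_rpow (n : ℕ) (C r : ℝ) (hC : 0 < C) (hr : (n:ℝ) - 1 < r) :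
    MCl n (fun t => C * (1 + t) ^ r) := by
  induction n generalizing C r with
  | zero =>
    constructor
    · apply ContinuousOn.mul continuousOn_const
      apply ContinuousOn.rpow_const (by fun_prop)
      intro x hx
      left
      have : -1 < x := hx
      linarith
    · intro t ht
      have : 0 < 1 + t := by linarith
      positivity
  | succ n ih =>
    push_cast at hr
    refine ⟨?_, fun t => (C * r) * (1 + t) ^ (r - 1), ih _ _ ?_ (by linarith), ?_⟩
    · intro t ht
      have : 0 < 1 + t := by linarith
      positivity
    · have : (0:ℝ) ≤ n := n.cast_nonneg
      have : 0 < r := by linarith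
      positivity
    · intro t ht
      have h3 : HasDerivAt (fun t : ℝ => 1 + t) 1 t := (hasDerivAt_id t).const_add 1
      have := (h3.rpow_const (p := r) (Or.inl (by linarith : 1 + t ≠ 0))).const_mul C
      refine HasDerivAt.congr_deriv this ?_
      ring

noncomputable def EE (x : ℝ) : ℂ := Complex.exp (x * Complex.I)

lemma EE_add (x y : ℝ) : EE (x + y) = EE x * EE y := by
  unfold EE
  rw [← Complex.exp_add]
  push_cast
  ring_nf

lemma EE_eq (x : ℝ) : EE x = (cos x : ℂ) + (sin x : ℂ) * Complex.I := by
  unfold EE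
  rw [Complex.exp_mul_I]
  push_cast
  rfl

lemma EE_two_cos (x : ℝ) : ((2 * cos x : ℝ) : ℂ) = EE x + EE (-x) := by
  rw [EE_eq, EE_eq, Real.cos_neg, Real.sin_neg]
  push_cast
  ring

lemma EE_sin (A B : ℝ) :
    (sin A : ℂ) * EE B + (sin B : ℂ) * EE (-A) = ((sin (A + B) : ℝ) : ℂ) := by
  rw [EE_eq, EE_eq, Real.cos_neg, Real.sin_neg, Real.sin_add]
  push_cast
  ring

noncomputable def GP (δ : ℝ) (n : ℕ) (θ : ℝ) : ℝ :=
  ∏ l ∈ Finset.range n, (2 * cos (θ + ((l:ℝ) - ((n:ℝ) - 1) / 2) * δ))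

noncomputable def qf (δ : ℝ) (n : ℕ) : ℝ := ∏ i ∈ Finset.range n, sin (((i:ℝ) + 1) * δ)

noncomputable def qb (δ : ℝ) (n k : ℕ) : ℝ := qf δ n / (qf δ k * qf δ (n - k))

lemma qf_succ (δ : ℝ) (n : ℕ) : qf δ (n+1) = qf δ n * sin (((n:ℝ) + 1) * δ) :=
  Finset.prod_range_succ _ _

lemma sin_pos_aux {δ : ℝ} (hδ : 0 < δ) {n i : ℕ} (hn : (n:ℝ) * δ < π) (hi : i < n) :
    0 < sin (((i:ℝ) + 1) * δ) := by
  apply Real.sin_pos_of_pos_of_lt_pi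
  · positivity
  · have : ((i:ℝ) + 1) ≤ n := by exact_mod_cast hi
    nlinarith

lemma qf_pos {δ : ℝ} (hδ : 0 < δ) {n : ℕ} (hn : (n:ℝ) * δ < π) {m : ℕ} (hm : m ≤ n) :
    0 < qf δ m := by
  apply Finset.prod_pos
  intro i hi
  exact sin_pos_aux hδ hn ((Finset.mem_range.1 hi).trans_le hm)

lemma qb_nonneg {δ : ℝ} (hδ : 0 < δ) {n : ℕ} (hn : (n:ℝ) * δ < π) {k : ℕ} (hk : k ≤ n) :
    0 ≤ qb δ n k := by
  have h1 := qf_pos hδ hn le_rfl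
  have h2 := qf_pos hδ hn hk
  have h3 := qf_pos hδ hn (Nat.sub_le n k)
  unfold qb
  positivity

lemma qb_rec1 {δ : ℝ} (hδ : 0 < δ) {n : ℕ} (hn : ((n + 1 : ℕ):ℝ) * δ < π) {k : ℕ} (hk : k ≤ n) :
    sin (((n:ℝ) + 1) * δ) * qb δ n k = qb δ (n+1) k * sin (((n:ℝ) + 1 - k) * δ) := by
  have h2 := qf_pos hδ hn (hk.trans n.le_succ)
  have h3 := qf_pos hδ hn ((Nat.sub_le n k).trans n.le_succ)
  obtain ⟨d, rfl⟩ := Nat.exists_eq_add_of_le hk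
  have h4 := sin_pos_aux hδ hn (i := d) (by omega)
  unfold qb
  rw [show k + d + 1 - k = d + 1 by omega, show k + d - k = d by omega, qf_succ, qf_succ]
  rw [show k + d - k = d by omega] at h3
  rw [show ((k + d : ℕ) : ℝ) + 1 - k = d + 1 by push_cast; ring]
  generalize sin (((d:ℝ) + 1) * δ) = S at h4 ⊢
  field_simp

lemma qb_rec2 {δ : ℝ} (hδ : 0 < δ) {n : ℕ} (hn : ((n + 1 : ℕ):ℝ) * δ < π) {k : ℕ} (hk : k ≤ n) :
    sin (((n:ℝ) + 1) * δ) * qb δ n k = qb δ (n+1) (k+1) * sin (((k:ℝ) + 1) * δ) := by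
  have h2 := qf_pos hδ hn (hk.trans n.le_succ)
  have h3 := qf_pos hδ hn ((Nat.sub_le n k).trans n.le_succ)
  have h4 := sin_pos_aux hδ hn (i := k) (by omega)
  unfold qb
  rw [show n + 1 - (k + 1) = n - k by omega, qf_succ, qf_succ]
  generalize sin (((k:ℝ) + 1) * δ) = S at h4 ⊢
  field_simp

lemma GP_succ (δ : ℝ) (n : ℕ) (θ : ℝ) :
    GP δ (n+1) θ = GP δ n (θ - δ/2) * (2 * cos (θ + n * δ / 2)) := by
  unfold GP
  rw [Finset.prod_range_succ]
  congr 1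
  · apply Finset.prod_congr rfl
    intro l _
    congr 2
    push_cast
    ring
  · congr 2
    push_cast
    ring

lemma GP_expand {δ : ℝ} (hδ : 0 < δ) {n : ℕ} (hn : (n:ℝ) * δ < π) (θ : ℝ) :
    (GP δ n θ : ℂ) = ∑ k ∈ Finset.range (n+1), (qb δ n k : ℂ) * EE (((n:ℝ) - 2 * k) * θ) := by
  induction n generalizing θ with
  | zero => simp [GP, qb, qf, EE]
  | succ n ih =>
    have hn' : (n:ℝ) * δ < π := by push_cast at hn; linarith
    have hS := sin_pos_aux hδ hn (i := n) (by omega)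
    have hSc : (sin (((n:ℝ) + 1) * δ) : ℂ) ≠ 0 := by exact_mod_cast hS.ne'
    apply mul_left_cancel₀ hSc
    rw [GP_succ, Complex.ofReal_mul, ih hn', EE_two_cos]
    have e1 : (sin (((n:ℝ) + 1) * δ) : ℂ) *
        ∑ k ∈ Finset.range (n+1), (qb δ n k : ℂ) * EE (((n:ℝ) - 2 * k) * (θ - δ/2)) * EE (θ + n * δ / 2)
        = ∑ k ∈ Finset.range (n+2), (qb δ (n+1) k : ℂ) * EE (((n:ℝ) + 1 - 2 * k) * θ) *
            ((sin (((n:ℝ) + 1 - k) * δ) : ℂ) * EE (k * δ)) := by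
      rw [Finset.sum_range_succ _ (n+1), Finset.mul_sum]
      have : (sin (((n:ℝ) + 1 - ((n+1 : ℕ):ℝ)) * δ)) = 0 := by push_cast; simp
      rw [this]
      simp only [Complex.ofReal_zero, zero_mul, mul_zero, add_zero]
      apply Finset.sum_congr rfl
      intro k hk
      have hk : k ≤ n := by simpa [Nat.lt_succ_iff] using hk
      have := congrArg (fun x : ℝ => (x : ℂ)) (qb_rec1 hδ hn hk)
      simp only [Complex.ofReal_mul] at this
      rw [mul_assoc (qb δ n k : ℂ), ← EE_add, ← mul_assoc, this,
        mul_mul_mul_comm, ← EE_add]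
      congr 2
      ring
    have e2 : (sin (((n:ℝ) + 1) * δ) : ℂ) *
        ∑ k ∈ Finset.range (n+1), (qb δ n k : ℂ) * EE (((n:ℝ) - 2 * k) * (θ - δ/2)) * EE (-(θ + n * δ / 2))
        = ∑ k ∈ Finset.range (n+2), (qb δ (n+1) k : ℂ) * EE (((n:ℝ) + 1 - 2 * k) * θ) *
            ((sin ((k:ℝ) * δ) : ℂ) * EE (-(((n:ℝ) + 1 - k) * δ))) := by
      rw [Finset.sum_range_succ' _ (n+1), Finset.mul_sum]
      simp only [Nat.cast_zero, zero_mul, Real.sin_zero, Complex.ofReal_zero, mul_zero, add_zero]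
      apply Finset.sum_congr rfl
      intro k hk
      have hk : k ≤ n := by simpa [Nat.lt_succ_iff] using hk
      have := congrArg (fun x : ℝ => (x : ℂ)) (qb_rec2 hδ hn hk)
      simp only [Complex.ofReal_mul] at this
      rw [mul_assoc (qb δ n k : ℂ), ← EE_add, ← mul_assoc, this,
        mul_mul_mul_comm, ← EE_add]
      push_cast
      congr 2
      ring
    rw [mul_add, Finset.sum_mul, Finset.sum_mul, mul_add, e1, e2, ← Finset.sum_add_distrib,
      Finset.mul_sum]
    apply Finset.sum_congr rfl
    intro k _
    rw [← mul_add, EE_sin, mul_comm]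
    congr 3
    · ring
    · push_cast; ring_nf

def PDN (N : ℕ) (W : ℝ → ℝ) : Prop :=
  ∀ θ : Fin N → ℝ, ∑ k : Fin N, ∑ l : Fin N, W (((k:ℕ):ℝ) * π / N - ((l:ℕ):ℝ) * π / N) ≤
    ∑ k : Fin N, ∑ l : Fin N, W (θ k - θ l)

lemma PDN.add {N : ℕ} {V W : ℝ → ℝ} (hV : PDN N V) (hW : PDN N W) :
    PDN N (fun t => V t + W t) := by
  intro θ
  simp only [Finset.sum_add_distrib]
  exact add_le_add (hV θ) (hW θ)

lemma PDN.smul {N : ℕ} {W : ℝ → ℝ} {c : ℝ} (hc : 0 ≤ c) (hW : PDN N W) :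
    PDN N (fun t => c * W t) := by
  intro θ
  simp only [← Finset.mul_sum]
  exact mul_le_mul_of_nonneg_left (hW θ) hc

lemma PDN.zero {N : ℕ} : PDN N (fun _ => 0) := fun _ => by simp

lemma PDN.sum {N : ℕ} {ι : Type*} (s : Finset ι) {W : ι → ℝ → ℝ} (h : ∀ i ∈ s, PDN N (W i)) :
    PDN N (fun t => ∑ i ∈ s, W i t) := by
  classical
  induction s using Finset.induction_on with
  | empty => simpa using PDN.zero
  | insert a s ha ih =>
    simp only [Finset.sum_insert ha]
    exact (h a (by simp)).add (ih fun i hi => h i (by simp [hi]))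

lemma sum_cos_sub {N : ℕ} (x : Fin N → ℝ) :
    ∑ k, ∑ l, cos (x k - x l) = (∑ k, cos (x k)) ^ 2 + (∑ k, sin (x k)) ^ 2 := by
  simp only [Real.cos_sub, Finset.sum_add_distrib, sq, Finset.sum_mul_sum]

lemma sum_EE {N : ℕ} (hN : 0 < N) (s : ℤ) (hs0 : s ≠ 0) (hs : |s| < N) :
    ∑ k : Fin N, EE (2 * s * (((k:ℕ):ℝ) * π / N)) = 0 := by
  have hNr : (N:ℝ) ≠ 0 := by positivity
  have hNc : (N:ℂ) ≠ 0 := by exact_mod_cast hNr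
  have h1 : ∀ k : ℕ, EE (2 * s * ((k:ℝ) * π / N)) = (EE (2 * s * (π / N))) ^ k := by
    intro k
    unfold EE
    rw [← Complex.exp_nat_mul]
    congr 1
    push_cast
    ring
  rw [Fin.sum_univ_eq_sum_range (fun k => EE (2 * s * ((k:ℝ) * π / N)))]
  simp only [h1]
  have hne : EE (2 * s * (π / N)) ≠ 1 := by
    unfold EE
    intro h
    rw [Complex.exp_eq_one_iff] at h
    obtain ⟨n, hn⟩ := h
    have h2 : (s : ℂ) = n * N := by
      have hpi : (π : ℂ) ≠ 0 := by exact_mod_cast Real.pi_ne_zero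
      have hI := Complex.I_ne_zero
      push_cast at hn
      field_simp at hn
      linear_combination hn
    have h3 : s = n * N := by exact_mod_cast h2
    have hn0 : n ≠ 0 := by rintro rfl; simp at h3; exact hs0 h3
    rw [h3, abs_mul, Nat.abs_cast] at hs
    have : 1 ≤ |n| := Int.one_le_abs hn0
    nlinarith
  rw [geom_sum_eq hne, ← h1]
  have : EE (2 * s * ((N:ℝ) * π / N)) = 1 := by
    unfold EE
    rw [Complex.exp_eq_one_iff]
    refine ⟨s, ?_⟩
    push_cast
    field_simp
  rw [this]
  simp

lemma PDN_cos {N : ℕ} (hN : 0 < N) (s : ℤ) (hs : |s| < N) : PDN N (fun t => cos (2 * s * t)) := by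
  by_cases hs0 : s = 0
  · subst hs0; intro θ; simp
  intro θ
  simp only [mul_sub]
  rw [sum_cos_sub (fun k : Fin N => 2 * (s:ℝ) * (((k:ℕ):ℝ) * π / N)),
    sum_cos_sub (fun k : Fin N => 2 * (s:ℝ) * θ k)]
  have h := sum_EE hN s hs0 hs
  simp only [EE_eq] at h
  have hre := congrArg Complex.re h
  have him := congrArg Complex.im h
  simp [-Complex.ofReal_cos, -Complex.ofReal_sin] at hre him
  rw [hre, him]
  simp
  positivity

lemma PDN_GP {N : ℕ} (hN : 0 < N) {a b m : ℕ} (ha : a < N) (hb : b < N) (hab : a + b = 2 * m)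
    (hm : m < N) : PDN N (fun t => GP (π / N) a t * GP (π / N) b t) := by
  have hδ : 0 < π / N := by positivity
  have hlt : ∀ n : ℕ, n < N → (n:ℝ) * (π / N) < π := by
    intro n hn
    have : (n:ℝ) < N := by exact_mod_cast hn
    have h0 : (0:ℝ) < N := by positivity
    rw [mul_div_assoc', div_lt_iff₀ h0]
    nlinarith [Real.pi_pos]
  have e : ∀ t, GP (π / N) a t * GP (π / N) b t =
      ∑ k ∈ Finset.range (a+1), ∑ l ∈ Finset.range (b+1),
        (qb (π/N) a k * qb (π/N) b l) * cos (2 * ((m - k - l : ℤ) : ℝ) * t) := by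
    intro t
    have h : ((GP (π / N) a t * GP (π / N) b t : ℝ) : ℂ) = ∑ k ∈ Finset.range (a+1), ∑ l ∈ Finset.range (b+1),
        ((qb (π/N) a k * qb (π/N) b l : ℝ) : ℂ) * EE (2 * ((m - k - l : ℤ) : ℝ) * t) := by
      rw [Complex.ofReal_mul, GP_expand hδ (hlt a ha), GP_expand hδ (hlt b hb), Finset.sum_mul_sum]
      refine Finset.sum_congr rfl fun k _ => Finset.sum_congr rfl fun l _ => ?_
      rw [mul_mul_mul_comm, ← EE_add, Complex.ofReal_mul]
      congr 2
      have : (a:ℝ) + b = 2 * m := by exact_mod_cast hab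
      push_cast
      linear_combination t * this
    have hre := congrArg Complex.re h
    rw [Complex.ofReal_re] at hre
    rw [hre, Complex.re_sum]
    refine Finset.sum_congr rfl fun k _ => ?_
    rw [Complex.re_sum]
    refine Finset.sum_congr rfl fun l _ => ?_
    rw [Complex.re_ofReal_mul, EE_eq]
    simp [-Complex.ofReal_cos, -Complex.ofReal_sin]
  simp only [e]
  refine PDN.sum _ fun k hk => PDN.sum _ fun l hl => ?_
  have hk : k ≤ a := by simpa [Nat.lt_succ_iff] using hk
  have hl : l ≤ b := by simpa [Nat.lt_succ_iff] using hl
  apply PDN.smul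
  · exact mul_nonneg (qb_nonneg hδ (hlt a ha) hk) (qb_nonneg hδ (hlt b hb) hl)
  · apply PDN_cos hN
    rw [abs_lt]
    omega

lemma GP_succ_succ (δ : ℝ) (n : ℕ) (θ : ℝ) :
    GP δ (n+2) θ = GP δ n θ * (2 * (cos (2 * θ) + cos (((n:ℝ) + 1) * δ))) := by
  have h : 2 * (cos (2 * θ) + cos (((n:ℝ) + 1) * δ)) =
      (2 * cos (θ + ((n:ℝ) + 1) / 2 * δ)) * (2 * cos (θ - ((n:ℝ) + 1) / 2 * δ)) := by
    rw [Real.cos_add_cos]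
    ring_nf
  rw [h]
  unfold GP
  rw [Finset.prod_range_succ, Finset.prod_range_succ']
  have : ∀ l ∈ Finset.range n, (2 * cos (θ + (((l + 1 : ℕ):ℝ) - (((n + 2 : ℕ):ℝ) - 1) / 2) * δ)) =
    (2 * cos (θ + ((l:ℝ) - ((n:ℝ) - 1) / 2) * δ)) := by
    intro l _
    congr 2
    push_cast
    ring
  rw [Finset.prod_congr rfl this, mul_assoc, mul_comm (2 * cos (θ + ((n:ℝ) + 1) / 2 * δ))]
  congr 3
  · congr 1; push_cast; ring
  · congr 1; push_cast; ring

noncomputable def nd (δ : ℝ) (e i : ℕ) : ℝ := - cos (((2 * i + e : ℕ) + 1 : ℝ) * δ)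

noncomputable def QQ (δ : ℝ) (e j : ℕ) (t : ℝ) : ℝ := ∏ i ∈ Finset.range j, (t - nd δ e i)

lemma GP_QQ (δ : ℝ) (e j : ℕ) (θ : ℝ) :
    GP δ (2 * j + e) θ = GP δ e θ * (2 ^ j * QQ δ e j (cos (2 * θ))) := by
  induction j with
  | zero => simp [QQ]
  | succ j ih =>
    rw [show 2 * (j + 1) + e = (2 * j + e) + 2 by ring, GP_succ_succ, ih]
    unfold QQ
    rw [Finset.prod_range_succ, pow_succ]
    unfold nd
    ring

lemma GP_e (δ : ℝ) {e : ℕ} (he : e ≤ 1) (θ : ℝ) :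
    GP δ e θ ^ 2 = 2 ^ e * (1 + cos (2 * θ)) ^ e := by
  interval_cases e
  · simp [GP]
  · simp [GP, Real.cos_two_mul]
    ring

lemma prod_eq1 (δ : ℝ) {e : ℕ} (he : e ≤ 1) (j : ℕ) (θ : ℝ) :
    (1 + cos (2 * θ)) ^ e * QQ δ e j (cos (2 * θ)) ^ 2 =
      (1 / (2 ^ e * 4 ^ j)) * (GP δ (2 * j + e) θ * GP δ (2 * j + e) θ) := by
  rw [← sq, GP_QQ, mul_pow, GP_e δ he]
  have : (4:ℝ) ^ j = (2 ^ j) ^ 2 := by rw [← pow_mul, mul_comm, pow_mul]; norm_num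
  rw [this]
  field_simp

lemma prod_eq2 (δ : ℝ) {e : ℕ} (he : e ≤ 1) (j : ℕ) (θ : ℝ) :
    (1 + cos (2 * θ)) ^ e * (QQ δ e j (cos (2 * θ)) ^ 2 * (cos (2 * θ) - nd δ e j)) =
      (1 / (2 ^ e * 4 ^ j * 2)) * (GP δ (2 * j + e) θ * GP δ (2 * j + e + 2) θ) := by
  rw [← mul_assoc, prod_eq1 δ he, GP_succ_succ, nd]
  field_simp
  ring

lemma nd_gt {δ : ℝ} (hδ : 0 < δ) {e i : ℕ} (h : ((2 * i + e : ℕ) + 1 : ℝ) * δ < π) :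
    -1 < nd δ e i := by
  unfold nd
  have : cos (((2 * i + e : ℕ) + 1 : ℝ) * δ) < cos 0 := by
    apply Real.cos_lt_cos_of_nonneg_of_le_pi le_rfl h.le
    positivity
  rw [Real.cos_zero] at this
  linarith

lemma newton {N m e : ℕ} (he : e ≤ 1) (hN : N = 2 * m + 1 + e) {g : ℝ → ℝ} (hg : MCl (2 * m) g)
    (j : ℕ) (hj : j ≤ m) :
    ∃ R k : ℝ → ℝ, MCl (2 * (m - j)) R ∧ Continuous k ∧
      PDN N (fun θ => (1 + cos (2 * θ)) ^ e * k (cos (2 * θ))) ∧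
      (∀ t, -1 < t → g t = k t + R t * QQ (π / N) e j t ^ 2) ∧
      (0 < j → ∃ c > 0, ∀ t, -1 < t → t ≤ 1 → c ≤ R t) := by
  have hN0 : 0 < N := by omega
  have hδ : 0 < π / N := by positivity
  induction j with
  | zero =>
    refine ⟨g, fun _ => 0, hg, continuous_const, ?_, ?_, ?_⟩
    · simpa using PDN.zero
    · simp [QQ]
    · simp
  | succ j ih =>
    obtain ⟨R, k, h1, h2, h3, h4, -⟩ := ih (by omega)
    have ha : -1 < nd (π / N) e j := by
      apply nd_gt hδ
      have h0 : (0:ℝ) < N := by positivity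
      rw [mul_div_assoc', div_lt_iff₀ h0, mul_comm]
      apply mul_lt_mul_of_pos_left _ Real.pi_pos
      have : (2 * j + e) + 1 < N := by omega
      exact_mod_cast this
    rw [show 2 * (m - j) = 2 * (m - (j + 1)) + 1 + 1 by omega] at h1
    obtain ⟨R1, hR1, -, e1⟩ := h1.slope ha
    obtain ⟨R2, hR2, hc, e2⟩ := hR1.slope ha
    set a := nd (π / N) e j with hadef
    refine ⟨R2, fun t => k t + (R a * QQ (π / N) e j t ^ 2 +
      R1 a * (QQ (π / N) e j t ^ 2 * (t - a))), hR2, ?_, ?_, ?_, fun _ => hc⟩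
    · have : Continuous (QQ (π / N) e j) := by
        unfold QQ
        fun_prop
      fun_prop
    · have p1 : PDN N (fun θ => R a * ((1 + cos (2 * θ)) ^ e * QQ (π / N) e j (cos (2 * θ)) ^ 2)) := by
        apply PDN.smul (h1.pos a ha).le
        simp only [prod_eq1 _ he]
        apply PDN.smul (by positivity)
        exact PDN_GP hN0 (m := 2 * j + e) (by omega) (by omega) (by omega) (by omega)
      have p2 : PDN N (fun θ => R1 a * ((1 + cos (2 * θ)) ^ e * (QQ (π / N) e j (cos (2 * θ)) ^ 2 * (cos (2 * θ) - a)))) := by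
        apply PDN.smul (hR1.pos a ha).le
        simp only [hadef, prod_eq2 _ he]
        apply PDN.smul (by positivity)
        exact PDN_GP hN0 (m := 2 * j + e + 1) (by omega) (by omega) (by omega) (by omega)
      have := h3.add (p1.add p2)
      convert this using 2
      ring
    · intro t ht
      rw [h4 t ht, e1 t ht, e2 t ht]
      have : QQ (π / N) e (j+1) t = QQ (π / N) e j t * (t - a) := Finset.prod_range_succ _ _
      rw [this]
      ring

lemma newton_rpow {N m e : ℕ} (he : e ≤ 1) (hm : 0 < m) (hN : N = 2 * m + 1 + e) {r : ℝ}
    (hr : 2 * (m:ℝ) - 1 < r) :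
    ∃ k : ℝ → ℝ, ∃ c > 0, 
      PDN N (fun θ => (1 + cos (2 * θ)) ^ e * k (cos (2 * θ))) ∧
      (∀ t, -1 ≤ t → t ≤ 1 → k t + c * QQ (π / N) e m t ^ 2 ≤ (1 + t) ^ r) ∧
      (∀ t, -1 < t → QQ (π / N) e m t = 0 → (1 + t) ^ r = k t) := by
  have hm1 : (1:ℝ) ≤ m := by exact_mod_cast hm
  obtain ⟨R, k, -, h2, h3, h4, h5⟩ := newton he hN
    (MCl_rpow (2 * m) 1 r one_pos (by push_cast; exact hr)) m le_rfl
  simp only [one_mul] at h4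
  obtain ⟨c, hc, h6⟩ := h5 hm
  refine ⟨k, c, hc, h3, ?_, ?_⟩
  · have hQ : Continuous (QQ (π / N) e m) := by
      unfold QQ
      fun_prop
    have hcl : IsClosed {t : ℝ | k t + c * QQ (π / N) e m t ^ 2 ≤ (1 + t) ^ r} := by
      apply isClosed_le (by fun_prop)
      exact (continuous_const.add continuous_id).rpow_const (fun _ => Or.inr (by linarith))
    have hsub : Set.Ioc (-1:ℝ) 1 ⊆ {t : ℝ | k t + c * QQ (π / N) e m t ^ 2 ≤ (1 + t) ^ r} := by
      intro t ht
      simp only [Set.mem_ofPred_eq]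
      rw [h4 t ht.1]
      have := h6 t ht.1 ht.2
      gcongr
    have h7 := hcl.closure_subset_iff.2 hsub
    rw [closure_Ioc (by norm_num)] at h7
    exact fun t h h' => h7 ⟨h, h'⟩
  · intro t ht hq
    rw [h4 t ht, hq]
    ring

lemma abs_cos_rpow (p x : ℝ) : |cos x| ^ p = (1 / 2) ^ (p / 2) * (1 + cos (2 * x)) ^ (p / 2) := by
  have h : 1 + cos (2 * x) = 2 * |cos x| ^ 2 := by rw [Real.cos_two_mul, sq_abs]; ring
  rw [h, Real.mul_rpow (by norm_num) (by positivity), ← mul_assoc,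
    ← Real.mul_rpow (by norm_num) (by norm_num), ← Real.rpow_natCast, ← Real.rpow_mul (abs_nonneg _)]
  norm_num
  congr 1
  ring

lemma aux_fun {N : ℕ} (hN : 5 ≤ N) {p : ℝ} (hp : 2 * (N:ℝ) - 4 < p) :
    ∃ H : ℝ → ℝ, ∃ κ > 0, PDN N H ∧
      (∀ x, H x + κ * GP (π / N) (N - 1) x ^ 2 ≤ |cos x| ^ p) ∧
      (∀ x, GP (π / N) (N - 1) x = 0 → |cos x| ^ p = H x) := by
  obtain ⟨m, e, he, hm, hNe⟩ : ∃ m e : ℕ, e ≤ 1 ∧ 0 < m ∧ N = 2 * m + 1 + e :=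
    ⟨(N - 1) / 2, (N - 1) % 2, by omega, by omega, by omega⟩
  have hNr : (N:ℝ) = 2 * m + 1 + e := by exact_mod_cast hNe
  have hm1 : (1:ℝ) ≤ m := by exact_mod_cast hm
  have her : (e:ℝ) ≤ 1 := by exact_mod_cast he
  have he0 : (0:ℝ) ≤ e := e.cast_nonneg
  obtain ⟨k, c, hc, h1, h2, h3⟩ := newton_rpow he hm hNe (r := p / 2 - e) (by linarith)
  set w : ℝ := (1 / 2) ^ (p / 2) with hw
  have hw0 : 0 < w := by positivity
  have hpow : ∀ x, |cos x| ^ p = w * ((1 + cos (2 * x)) ^ e * (1 + cos (2 * x)) ^ (p / 2 - e)) := by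
    intro x
    rw [abs_cos_rpow]
    congr 1
    have h0 : 0 ≤ 1 + cos (2 * x) := by linarith [Real.neg_one_le_cos (2 * x)]
    rw [← Real.rpow_natCast, ← Real.rpow_add' h0 (by linarith)]
    congr 1
    ring
  refine ⟨fun x => w * ((1 + cos (2 * x)) ^ e * k (cos (2 * x))),
    w * c * (1 / (2 ^ e * 4 ^ m)), by positivity, PDN.smul hw0.le h1, ?_, ?_⟩
  · intro x
    rw [hpow, show N - 1 = 2 * m + e by omega]
    have := prod_eq1 (π / N) he m x
    have h0 : 0 ≤ 1 + cos (2 * x) := by linarith [Real.neg_one_le_cos (2 * x)]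
    have h5 := mul_le_mul_of_nonneg_left (h2 _ (Real.neg_one_le_cos (2 * x)) (Real.cos_le_one _)) (pow_nonneg h0 e)
    have h6 := mul_le_mul_of_nonneg_left h5 hw0.le
    refine le_trans (le_of_eq ?_) h6
    linear_combination - w * c * this
  · intro x hx
    rw [hpow]
    congr 1
    rw [show N - 1 = 2 * m + e by omega] at hx
    have := prod_eq1 (π / N) he m x
    rw [hx, mul_zero, mul_zero] at this
    by_cases hz : (1 + cos (2 * x)) ^ e = 0
    · rw [hz]; simp
    · have hq : QQ (π / N) e m (cos (2 * x)) = 0 := by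
        rcases mul_eq_zero.1 this with h | h
        · exact absurd h hz
        · exact pow_eq_zero_iff (two_ne_zero) |>.1 h
      by_cases h1 : cos (2 * x) = -1
      · have h7 : e = 0 := by
          by_contra h8
          apply hz
          rw [h1]
          simp [h8]
        exfalso
        rw [GP_QQ] at hx
        rw [h1] at hq
        obtain ⟨i, hi, hi2⟩ := Finset.prod_eq_zero_iff.1 hq
        have : -1 < nd (π / N) e i := by
          apply nd_gt (by positivity)
          have h0 : (0:ℝ) < N := by positivity
          rw [mul_div_assoc', div_lt_iff₀ h0, mul_comm]
          apply mul_lt_mul_of_pos_left _ Real.pi_pos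
          have := Finset.mem_range.1 hi
          have : (2 * i + e) + 1 < N := by omega
          exact_mod_cast this
        linarith
      · rw [h3 _ (lt_of_le_of_ne (Real.neg_one_le_cos _) (Ne.symm h1)) hq]

lemma GP_zero_iff {N : ℕ} (hN : 0 < N) (x : ℝ) :
    GP (π / N) (N - 1) x = 0 ↔ ∃ z : ℤ, x = z * π / N ∧ ¬ (N:ℤ) ∣ z := by
  have hNr : (N:ℝ) ≠ 0 := by positivity
  have hc : ((N - 1 : ℕ) : ℝ) = N - 1 := by rw [Nat.cast_sub (by omega)]; simp
  have hpi := Real.pi_ne_zero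
  unfold GP
  rw [Finset.prod_eq_zero_iff]
  constructor
  · rintro ⟨l, hl, h⟩
    have hl := Finset.mem_range.1 hl
    have h : cos (x + ((l:ℝ) - (((N - 1 : ℕ):ℝ) - 1) / 2) * (π / N)) = 0 := by linarith
    rw [Real.cos_eq_zero_iff] at h
    obtain ⟨w, hw⟩ := h
    refine ⟨N * w + (N - 1 - l), ?_, ?_⟩
    · rw [hc] at hw
      push_cast
      rw [eq_sub_of_add_eq hw]
      field_simp
      ring
    · rw [dvd_add_right (dvd_mul_right (N:ℤ) w)]
      intro hd
      have := Int.le_of_dvd (by omega) hd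
      omega
  · rintro ⟨z, rfl, hz⟩
    have h1 := Int.emod_add_mul_ediv z N
    have h2 := Int.emod_nonneg z (by omega : (N:ℤ) ≠ 0)
    have h3 := Int.emod_lt_of_pos z (by omega : (0:ℤ) < N)
    have h4 : z % N ≠ 0 := fun h => hz (Int.dvd_of_emod_eq_zero h)
    refine ⟨(N - 1 - z % N).toNat, ?_, ?_⟩
    · rw [Finset.mem_range]; omega
    · have : cos (z * π / N + ((((N - 1 - z % N).toNat : ℕ):ℝ) - (((N - 1 : ℕ):ℝ) - 1) / 2) * (π / N)) = 0 := by
        rw [Real.cos_eq_zero_iff]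
        refine ⟨z / N, ?_⟩
        have h5 : (((N - 1 - z % N).toNat : ℕ):ℝ) = N - 1 - ((z % N : ℤ) : ℝ) := by
          have : (((N - 1 - z % N).toNat : ℕ):ℤ) = N - 1 - z % N := Int.toNat_of_nonneg (by omega)
          exact_mod_cast congrArg (fun z : ℤ => (z:ℝ)) this
        have h6 : (z:ℝ) = ((z % N : ℤ):ℝ) + N * ((z / N : ℤ):ℝ) := by exact_mod_cast h1.symm
        rw [h5, hc]
        rw [h6]
        field_simp
        ring
      rw [this, mul_zero]

lemma angle_main {N : ℕ} (hN : 5 ≤ N) {p : ℝ} (hp : 2 * (N:ℝ) - 4 < p) :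
    ∃ κ > 0, ∀ θ : Fin N → ℝ,
      (∑ k : Fin N, ∑ l : Fin N, if k ≠ l then |cos (((k:ℕ):ℝ) * π / N - ((l:ℕ):ℝ) * π / N)| ^ p else 0)
      + κ * (∑ k : Fin N, ∑ l : Fin N, if k ≠ l then GP (π / N) (N - 1) (θ k - θ l) ^ 2 else 0)
      ≤ ∑ k : Fin N, ∑ l : Fin N, if k ≠ l then |cos (θ k - θ l)| ^ p else 0 := by
  obtain ⟨H, κ, hκ, hPD, h1, h2⟩ := aux_fun hN hp
  refine ⟨κ, hκ, fun θ => ?_⟩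
  have hsplit : ∀ φ : Fin N → ℝ, ∑ k : Fin N, ∑ l : Fin N, H (φ k - φ l) =
      (∑ k : Fin N, ∑ l : Fin N, if k ≠ l then H (φ k - φ l) else 0) + N * H 0 := by
    intro φ
    have : ∀ k : Fin N, ∑ l : Fin N, H (φ k - φ l) =
        (∑ l : Fin N, if k ≠ l then H (φ k - φ l) else 0) + H 0 := by
      intro k
      have h3 : H 0 = ∑ l : Fin N, if k = l then H (φ k - φ l) else 0 := by simp
      rw [h3, ← Finset.sum_add_distrib]
      refine Finset.sum_congr rfl fun l _ => ?_
      by_cases h : k = l <;> simp [h]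
    simp [this, Finset.sum_add_distrib]
  have hs := hPD θ
  rw [hsplit θ, hsplit (fun k => ((k:ℕ):ℝ) * π / N)] at hs
  have e1 : (∑ k : Fin N, ∑ l : Fin N, if k ≠ l then |cos (((k:ℕ):ℝ) * π / N - ((l:ℕ):ℝ) * π / N)| ^ p else 0)
      = ∑ k : Fin N, ∑ l : Fin N, if k ≠ l then H (((k:ℕ):ℝ) * π / N - ((l:ℕ):ℝ) * π / N) else 0 := by
    refine Finset.sum_congr rfl fun k _ => Finset.sum_congr rfl fun l _ => ?_
    split_ifs with h
    · apply h2
      rw [GP_zero_iff (by omega)]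
      refine ⟨(k:ℕ) - (l:ℕ), ?_, ?_⟩
      · push_cast; ring
      · intro hd
        apply h
        have hk := k.isLt
        have hl := l.isLt
        have := Int.eq_zero_of_abs_lt_dvd hd (by rw [abs_lt]; omega)
        ext
        omega
    · rfl
  have e2 : (∑ k : Fin N, ∑ l : Fin N, if k ≠ l then H (θ k - θ l) else 0) +
      κ * (∑ k : Fin N, ∑ l : Fin N, if k ≠ l then GP (π / N) (N - 1) (θ k - θ l) ^ 2 else 0)
      ≤ ∑ k : Fin N, ∑ l : Fin N, if k ≠ l then |cos (θ k - θ l)| ^ p else 0 := by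
    simp only [Finset.mul_sum, ← Finset.sum_add_distrib]
    refine Finset.sum_le_sum fun k _ => Finset.sum_le_sum fun l _ => ?_
    split_ifs with h
    · exact h1 _
    · simp
  rw [e1]
  linarith

lemma exists_angle (v : EuclideanSpace ℝ (Fin 2)) (hv : ‖v‖ = 1) :
    ∃ θ : ℝ, v 0 = cos θ ∧ v 1 = sin θ := by
  have h : v 0 ^ 2 + v 1 ^ 2 = 1 := by
    have := EuclideanSpace.real_norm_sq_eq v
    rw [hv, Fin.sum_univ_two] at this
    linarith
  have hz : ‖(⟨v 0, v 1⟩ : ℂ)‖ = 1 := by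
    rw [Complex.norm_def, Complex.normSq_mk, ← sq, ← sq, h, Real.sqrt_one]
  have hz0 : (⟨v 0, v 1⟩ : ℂ) ≠ 0 := by
    intro h0; rw [h0] at hz; simp at hz
  refine ⟨Complex.arg ⟨v 0, v 1⟩, ?_, ?_⟩
  · rw [Complex.cos_arg hz0, hz]; simp
  · rw [Complex.sin_arg, hz]; simp

lemma halfCircle_zero (N : ℕ) (k : Fin N) : halfCircle N k 0 = cos (((k:ℕ):ℝ) * π / N) := by
  simp [halfCircle]

lemma halfCircle_one (N : ℕ) (k : Fin N) : halfCircle N k 1 = sin (((k:ℕ):ℝ) * π / N) := by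
  simp [halfCircle]

lemma fp_angle (N : ℕ) (p : ℝ) (X : Fin N → EuclideanSpace ℝ (Fin 2)) (θ : Fin N → ℝ)
    (h : ∀ i, X i 0 = cos (θ i) ∧ X i 1 = sin (θ i)) :
    framePotential 2 N p X =
      ∑ k : Fin N, ∑ l : Fin N, if k ≠ l then |cos (θ k - θ l)| ^ p else 0 := by
  unfold framePotential
  refine Finset.sum_congr rfl fun k _ => Finset.sum_congr rfl fun l _ => ?_
  have : ⟪X k, X l⟫ = cos (θ k - θ l) := by
    rw [PiLp.inner_apply, Fin.sum_univ_two, Real.cos_sub, (h k).1, (h k).2, (h l).1, (h l).2]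
    simp
    ring
  rw [this]

lemma exists_rot (α : ℝ) : ∃ U : EuclideanSpace ℝ (Fin 2) ≃ₗᵢ[ℝ] EuclideanSpace ℝ (Fin 2),
    ∀ (v : EuclideanSpace ℝ (Fin 2)) (β : ℝ), v 0 = cos β → v 1 = sin β →
      U v 0 = cos (α + β) ∧ U v 1 = sin (α + β) := by
  refine ⟨(Complex.orthonormalBasisOneI.repr.symm.trans (rotation (Circle.exp α))).trans
    Complex.orthonormalBasisOneI.repr, ?_⟩
  intro v β h0 h1
  have hv : Complex.orthonormalBasisOneI.repr.symm v = EE β := by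
    rw [Complex.orthonormalBasisOneI_repr_symm_apply, h0, h1, EE_eq]
  simp only [LinearIsometryEquiv.trans_apply, hv, rotation_apply, Circle.coe_exp]
  have : Complex.exp (α * Complex.I) * EE β = EE (α + β) := by rw [EE_add]; rfl
  rw [this, Complex.orthonormalBasisOneI_repr_apply, EE_eq]
  simp [-Complex.ofReal_cos, -Complex.ofReal_sin]

lemma equiv_of_zero {N : ℕ} (hN : 5 ≤ N) (X : Fin N → EuclideanSpace ℝ (Fin 2)) (θ : Fin N → ℝ)
    (h : ∀ i, X i 0 = cos (θ i) ∧ X i 1 = sin (θ i))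
    (hz : ∀ k l : Fin N, k ≠ l → GP (π / N) (N - 1) (θ k - θ l) = 0) :
    EquivConfig 2 N (halfCircle N) X := by
  have hN0 : 0 < N := by omega
  have hNr : (N:ℝ) ≠ 0 := by positivity
  have hpi := Real.pi_ne_zero
  let o : Fin N := ⟨0, hN0⟩
  have hex : ∀ k : Fin N, ∃ z : ℤ, θ k = θ o + z * π / N := by
    intro k
    by_cases hk : k = o
    · exact ⟨0, by rw [hk]; simp⟩
    · obtain ⟨z, hz1, -⟩ := (GP_zero_iff hN0 _).1 (hz k o hk)
      exact ⟨z, by linarith⟩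
  choose z hzk using hex
  have hdist : ∀ k l : Fin N, k ≠ l → ¬ (N:ℤ) ∣ z k - z l := by
    intro k l hkl
    obtain ⟨w, hw1, hw2⟩ := (GP_zero_iff hN0 _).1 (hz k l hkl)
    have : w = z k - z l := by
      rw [hzk k, hzk l] at hw1
      field_simp at hw1
      have : (w:ℝ) = z k - z l := mul_left_cancel₀ hpi (by linear_combination -hw1)
      exact_mod_cast this
    rwa [← this]
  have h2 : ∀ k, 0 ≤ z k % N := fun k => Int.emod_nonneg _ (by omega)
  have h3 : ∀ k, z k % N < N := fun k => Int.emod_lt_of_pos _ (by omega)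
  let f : Fin N → Fin N := fun k => ⟨(z k % N).toNat, by have := h2 k; have := h3 k; omega⟩
  have hf : Function.Injective f := by
    intro k l hkl
    by_contra hne
    apply hdist k l hne
    have h4 : (z k % N).toNat = (z l % N).toNat := congrArg Fin.val hkl
    have h5 : z k % N = z l % N := by have := h2 k; have := h2 l; omega
    exact Int.ModEq.dvd (Int.ModEq.symm h5)
  obtain ⟨U, hU⟩ := exists_rot (θ o)
  refine ⟨U, Equiv.ofBijective f (Finite.injective_iff_bijective.1 hf),
    fun k => (-1:ℝ) ^ (z k / N), ?_, ?_⟩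
  · intro k
    rcases Int.even_or_odd (z k / N) with he | ho
    · left; exact he.neg_one_zpow
    · right; exact ho.neg_one_zpow
  · intro k
    have hUk := hU (halfCircle N (f k)) _ (halfCircle_zero N (f k)) (halfCircle_one N (f k))
    have hth : θ k = (θ o + (((f k : Fin N) : ℕ):ℝ) * π / N) + ((z k / N : ℤ):ℝ) * π := by
      have h5 : (((f k : Fin N) : ℕ):ℝ) = ((z k % N : ℤ):ℝ) := by
        have : (((z k % N).toNat : ℕ):ℤ) = z k % N := Int.toNat_of_nonneg (h2 k)
        exact_mod_cast congrArg (fun z : ℤ => (z:ℝ)) this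
      have h6 : (z k:ℝ) = ((z k % N : ℤ):ℝ) + N * ((z k / N : ℤ):ℝ) := by
        exact_mod_cast (Int.emod_add_mul_ediv (z k) N).symm
      rw [h5, hzk k, h6]
      field_simp
      ring
    simp only [Equiv.ofBijective_apply]
    ext i
    fin_cases i
    · simp only [Fin.zero_eta, PiLp.smul_apply, smul_eq_mul]
      rw [(h k).1, hUk.1, hth, Real.cos_add_int_mul_pi]
    · simp only [Fin.mk_one, PiLp.smul_apply, smul_eq_mul]
      rw [(h k).2, hUk.2, hth, Real.sin_add_int_mul_pi]

/-- For `N ≥ 5` and `p > 2N−2` (`N` even) resp. `p > 2N−4` (`N` odd), `X_N^(h)` is the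
unique (up to equivalence) minimizer of the `p`-frame potential `FP_{p,N,2}` over
`S(N,2)`. -/
theorem halfCircle_unique_minimizer_large_p
    (N : ℕ) (hN : 5 ≤ N) (p : ℝ) (hp : 0 < p)
    (hpeven : Even N → 2 * (N : ℝ) - 2 < p)
    (hpodd : ¬ Even N → 2 * (N : ℝ) - 4 < p) :
    (∀ X : Fin N → EuclideanSpace ℝ (Fin 2), (∀ i, ‖X i‖ = 1) →
      framePotential 2 N p (halfCircle N) ≤ framePotential 2 N p X) ∧
    (∀ X : Fin N → EuclideanSpace ℝ (Fin 2), (∀ i, ‖X i‖ = 1) →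
      framePotential 2 N p X = framePotential 2 N p (halfCircle N) →
      EquivConfig 2 N (halfCircle N) X) := by
  have hp' : 2 * (N:ℝ) - 4 < p := by
    by_cases he : Even N
    · linarith [hpeven he]
    · exact hpodd he
  obtain ⟨κ, hκ, hmain⟩ := angle_main hN hp'
  have hh := fp_angle N p (halfCircle N) (fun k => ((k:ℕ):ℝ) * π / N)
    (fun i => ⟨halfCircle_zero N i, halfCircle_one N i⟩)
  have hnn : ∀ θ : Fin N → ℝ, ∀ k ∈ Finset.univ, 0 ≤ ∑ l : Fin N,
      if k ≠ l then GP (π / N) (N - 1) (θ k - θ l) ^ 2 else 0 := by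
    intro θ k _
    refine Finset.sum_nonneg fun l _ => ?_
    split_ifs <;> positivity
  constructor
  · intro X hX
    choose θ hθ using fun i => exists_angle (X i) (hX i)
    have h1 := hmain θ
    rw [← hh, ← fp_angle N p X θ hθ] at h1
    have h2 := mul_nonneg hκ.le (Finset.sum_nonneg (hnn θ))
    linarith
  · intro X hX heq
    choose θ hθ using fun i => exists_angle (X i) (hX i)
    have h1 := hmain θ
    rw [← hh, ← fp_angle N p X θ hθ, heq] at h1
    have h2 := Finset.sum_nonneg (hnn θ)
    have h3 : (∑ k : Fin N, ∑ l : Fin N, if k ≠ l then GP (π / N) (N - 1) (θ k - θ l) ^ 2 else 0) = 0 := by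
      apply le_antisymm _ h2
      by_contra hlt
      push Not at hlt
      nlinarith [mul_pos hκ hlt]
    apply equiv_of_zero hN X θ hθ
    intro k l hkl
    have h4 := (Finset.sum_eq_zero_iff_of_nonneg (hnn θ)).1 h3 k (Finset.mem_univ _)
    have h5 := (Finset.sum_eq_zero_iff_of_nonneg (fun l _ => by split_ifs <;> positivity)).1 h4 l (Finset.mem_univ _)
    rw [if_pos hkl] at h5
    exact pow_eq_zero_iff two_ne_zero |>.1 h5
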